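/- (Compression multiplicativity estimate) Let P ∈ M_n(ℂ) be a nonzero projection of rank k, and define φ(x) = PxP viewed as a map into the k×k matrix algebra PM_n(ℂ)P with normalized trace tr_k = Tr(·)/Tr(P). Then for all a, b ∈ M_n(ℂ), ‖φ(ab) − φ(a)φ(b)‖₂ ≤ ‖b‖ · ( tr_k(φ(aa*) − φ(a)φ(a*)) + tr_k(φ(a*a) − φ(a*)φ(a)) )^{1/2}, where ‖x‖₂ = tr_k(x*x)^{1/2}. -/

import Mathlib

open Matrix

/-- The (L²) operator norm of a complex matrix. -/
noncomputable def opNorm {n : ℕ} (x : Matrix (Fin n) (Fin n) ℂ) : ℝ :=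
  ‖Matrix.toEuclideanCLM (𝕜 := ℂ) (n := Fin n) x‖

/-- The 2-norm `‖x‖₂ = (Tr(x* x)/k)^{1/2}` with respect to the trace normalized
by `k` (the rank of the corner projection). -/
noncomputable def cornerNorm2 {n : ℕ} (k : ℕ) (x : Matrix (Fin n) (Fin n) ℂ) : ℝ :=
  Real.sqrt (((xᴴ * x).trace / (k : ℂ)).re)

/-!
For a projection `P`, the defect `φ(ab) − φ(a)φ(b)` factors as `(Pa(1 − P)) b P`. In particular
`φ(aa*) − φ(a)φ(a*) = (Pa(1 − P)) (Pa(1 − P))*`, whose trace is the squared Hilbert–Schmidt norm of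
`Pa(1 − P)`. Since multiplication by `b` and by `P` increases the Hilbert–Schmidt norm by at most
the factors `‖b‖` and `‖P‖ ≤ 1`, the first of the two trace terms alone already bounds the defect;
the second one is nonnegative.
-/

section CompressionDefect

variable {R : Type*} [Ring R]

/-- The multiplicative defect `φ(xy) − φ(x)φ(y)` of the compression `φ(x) = pxp`. -/
def compressionDefect (p x y : R) : R :=
  p * (x * y) * p - (p * x * p) * (p * y * p)

theorem compressionDefect_eq_mul {p : R} (hp : IsIdempotentElem p) (x y : R) :
    compressionDefect p x y = p * x * (1 - p) * y * p := by
  calc compressionDefect p x y = p * x * y * p - p * x * (p * p) * y * p := by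
        simp only [compressionDefect, mul_assoc]
    _ = p * x * (1 - p) * y * p := by rw [hp.eq]; noncomm_ring

theorem compressionDefect_star_right [StarRing R] {p : R} (hp : IsStarProjection p) (x : R) :
    compressionDefect p x (star x) = p * x * (1 - p) * star (p * x * (1 - p)) := by
  calc compressionDefect p x (star x) = p * x * ((1 - p) * (1 - p)) * star x * p := by
        rw [compressionDefect_eq_mul hp.isIdempotentElem, hp.one_sub.isIdempotentElem.eq]
    _ = p * x * (1 - p) * star (p * x * (1 - p)) := by
        simp only [star_mul, hp.isSelfAdjoint.star_eq, hp.one_sub.isSelfAdjoint.star_eq, mul_assoc]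

end CompressionDefect

section FrobeniusNorm

open scoped Matrix.Norms.Frobenius

variable {𝕜 m n : Type*} [RCLike 𝕜] [Fintype m] [Fintype n]

theorem frobenius_norm_sq_eq_sum_col (A : Matrix m n 𝕜) :
    ‖A‖ ^ 2 = ∑ j, ‖WithLp.toLp 2 (A.col j)‖ ^ 2 := by
  simp_rw [frobenius_norm_def, EuclideanSpace.norm_sq_eq, Real.rpow_two]
  rw [← Real.sqrt_eq_rpow, Real.sq_sqrt (by positivity), Finset.sum_comm]
  rfl

theorem frobenius_norm_sq_eq_re_trace (A : Matrix m n 𝕜) :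
    ‖A‖ ^ 2 = RCLike.re (Aᴴ * A).trace := by
  simp_rw [frobenius_norm_sq_eq_sum_col, EuclideanSpace.norm_sq_eq, trace, diag_apply, mul_apply,
    map_sum, conjTranspose_apply, RCLike.star_def, RCLike.conj_mul, ← RCLike.ofReal_pow,
    RCLike.ofReal_re, col_apply]

theorem frobenius_norm_eq_sqrt_re_trace (A : Matrix m n 𝕜) :
    ‖A‖ = √(RCLike.re (Aᴴ * A).trace) := by
  rw [← frobenius_norm_sq_eq_re_trace, Real.sqrt_sq (norm_nonneg A)]

variable [DecidableEq n]

theorem frobenius_norm_mul_le_l2_opNorm_mul (A : Matrix n n 𝕜) (B : Matrix n m 𝕜) :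
    ‖A * B‖ ≤ ‖toEuclideanCLM (𝕜 := 𝕜) A‖ * ‖B‖ := by
  refine le_of_sq_le_sq ?_ (by positivity)
  rw [mul_pow, frobenius_norm_sq_eq_sum_col, frobenius_norm_sq_eq_sum_col, Finset.mul_sum]
  refine Finset.sum_le_sum fun j _ ↦ ?_
  rw [← mul_pow]
  gcongr
  exact (toEuclideanCLM (𝕜 := 𝕜) A).le_opNorm (WithLp.toLp 2 (B.col j))

theorem frobenius_norm_mul_le_mul_l2_opNorm (A : Matrix m n 𝕜) (B : Matrix n n 𝕜) :
    ‖A * B‖ ≤ ‖A‖ * ‖toEuclideanCLM (𝕜 := 𝕜) B‖ := by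
  calc ‖A * B‖ = ‖Bᴴ * Aᴴ‖ := by rw [← conjTranspose_mul, frobenius_norm_conjTranspose]
    _ ≤ ‖toEuclideanCLM (𝕜 := 𝕜) Bᴴ‖ * ‖Aᴴ‖ := frobenius_norm_mul_le_l2_opNorm_mul Bᴴ Aᴴ
    _ = ‖A‖ * ‖toEuclideanCLM (𝕜 := 𝕜) B‖ := by
        rw [frobenius_norm_conjTranspose, mul_comm]
        exact congrArg (‖A‖ * ·) (l2_opNorm_conjTranspose B)

variable {P : Matrix n n 𝕜}

theorem re_trace_compressionDefect_conjTranspose_right (hP : IsStarProjection P)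
    (a : Matrix n n 𝕜) :
    RCLike.re (compressionDefect P a aᴴ).trace = ‖P * a * (1 - P)‖ ^ 2 := by
  rw [← star_eq_conjTranspose, compressionDefect_star_right hP, frobenius_norm_sq_eq_re_trace,
    star_eq_conjTranspose, trace_mul_comm]

theorem compression_multiplicativity_estimate_general (hP : IsStarProjection P)
    (a b : Matrix n n 𝕜) :
    ‖compressionDefect P a b‖ ≤
      ‖toEuclideanCLM (𝕜 := 𝕜) b‖ * √(RCLike.re (compressionDefect P a aᴴ).trace) := by
  have norm_P_le_one : ‖toEuclideanCLM (𝕜 := 𝕜) P‖ ≤ 1 := (hP.map toEuclideanCLM).norm_le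
  calc ‖compressionDefect P a b‖ = ‖P * a * (1 - P) * b * P‖ := by
        rw [compressionDefect_eq_mul hP.isIdempotentElem]
    _ ≤ ‖P * a * (1 - P) * b‖ * ‖toEuclideanCLM (𝕜 := 𝕜) P‖ :=
        frobenius_norm_mul_le_mul_l2_opNorm _ P
    _ ≤ ‖P * a * (1 - P) * b‖ := mul_le_of_le_one_right (norm_nonneg _) norm_P_le_one
    _ ≤ ‖P * a * (1 - P)‖ * ‖toEuclideanCLM (𝕜 := 𝕜) b‖ := frobenius_norm_mul_le_mul_l2_opNorm _ b
    _ = ‖toEuclideanCLM (𝕜 := 𝕜) b‖ * √(RCLike.re (compressionDefect P a aᴴ).trace) := by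
        rw [re_trace_compressionDefect_conjTranspose_right hP, Real.sqrt_sq (norm_nonneg _),
          mul_comm]

end FrobeniusNorm

section CornerNorm

open scoped Matrix.Norms.Frobenius

variable {n : ℕ} {P : Matrix (Fin n) (Fin n) ℂ}

theorem cornerNorm2_eq_frobenius_norm_div (k : ℕ) (x : Matrix (Fin n) (Fin n) ℂ) :
    cornerNorm2 k x = ‖x‖ / √k := by
  rw [cornerNorm2, Complex.div_natCast_re, Real.sqrt_div' _ k.cast_nonneg,
    frobenius_norm_eq_sqrt_re_trace, RCLike.re_eq_complex_re]

theorem cornerNorm2_compressionDefect_le (hP : IsStarProjection P) (k : ℕ)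
    (a b : Matrix (Fin n) (Fin n) ℂ) :
    cornerNorm2 k (compressionDefect P a b) ≤
      opNorm b * √(((compressionDefect P a aᴴ).trace / (k : ℂ)).re) := by
  rw [cornerNorm2_eq_frobenius_norm_div, Complex.div_natCast_re, Real.sqrt_div' _ k.cast_nonneg,
    ← mul_div_assoc]
  gcongr
  exact compression_multiplicativity_estimate_general hP a b

theorem re_trace_compressionDefect_conjTranspose_right_div_nonneg (hP : IsStarProjection P)
    (k : ℕ) (a : Matrix (Fin n) (Fin n) ℂ) :
    0 ≤ ((compressionDefect P a aᴴ).trace / (k : ℂ)).re := by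
  rw [Complex.div_natCast_re, ← RCLike.re_eq_complex_re,
    re_trace_compressionDefect_conjTranspose_right hP]
  positivity

end CornerNorm

/-- Compression multiplicativity estimate: for the compression `φ(x) = PxP` by a rank-`k`
projection `P`, one has
`‖φ(ab) − φ(a)φ(b)‖₂ ≤ ‖b‖·(tr_k(φ(aa*) − φ(a)φ(a*)) + tr_k(φ(a*a) − φ(a*)φ(a)))^{1/2}`. -/
theorem compression_multiplicativity_estimate {n : ℕ} (P : Matrix (Fin n) (Fin n) ℂ)
    (hP : Pᴴ = P) (hP2 : P * P = P) (k : ℕ) (hk : 0 < k) (htr : P.trace = (k : ℂ))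
    (a b : Matrix (Fin n) (Fin n) ℂ) :
    cornerNorm2 k (P * (a * b) * P - (P * a * P) * (P * b * P))
      ≤ opNorm b *
        Real.sqrt ((((P * (a * aᴴ) * P - (P * a * P) * (P * aᴴ * P)).trace / (k : ℂ)).re
          + ((P * (aᴴ * a) * P - (P * aᴴ * P) * (P * a * P)).trace / (k : ℂ)).re)) := by
  have hPproj : IsStarProjection P := ⟨hP2, hP⟩
  have second_term_nonneg : 0 ≤ ((compressionDefect P aᴴ a).trace / (k : ℂ)).re := by
    simpa only [conjTranspose_conjTranspose] using
      re_trace_compressionDefect_conjTranspose_right_div_nonneg hPproj k aᴴ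
  exact (cornerNorm2_compressionDefect_le hPproj k a b).trans <|
    mul_le_mul_of_nonneg_left (Real.sqrt_le_sqrt (le_add_of_nonneg_right second_term_nonneg))
      (norm_nonneg _)
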